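/- arXiv:2201.03789 — 2 statements merged into one kernel-verified Lean document; each statement's English description precedes it below -/
import Mathlib

section
/- (Telescoping identity for the partially averaged iterates.) Let J ∈ ℝ^{N×N} be an idempotent matrix (J² = J), let η ∈ ℝ, and let P_1, P_2, …, P_{K−1} ∈ ℝ^{N×N} be matrices each equal to J or to the identity I. Given x_1 ∈ ℝ^N with J x_1 = x_1 and vectors g_1, …, g_{K−1} ∈ ℝ^N, define recursively x_k = P_{k−1}(x_{k−1} − η g_{k−1}) for 2 ≤ k ≤ K. Then for every k ∈ {1,…,K}: (J − I) x_k = −η Σ_{s=1}^{k−1} ( J − Π_{l=s}^{k−1} P_l ) g_s, where Π_{l=s}^{k−1} P_l denotes the ordered product P_{k−1} P_{k−2} ⋯ P_s. -/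
/-!
Since `J` is idempotent and each `P l` is `J` or the identity, `J * P l = J = P l * J`. Hence
`(J - 1) * P l = P l * (J - 1) = J - P l`, so multiplying the error identity for `x k` by `P k`
transports it to `x (k + 1)`: `P k * (J - ∏ P) = J - P k * ∏ P`, and the fresh gradient contributes
`J - P k`, the summand of index `s = k`. The base case is `J x₁ = x₁`.
-/

open Finset

/-- The ordered matrix product `Π_{l=s}^{t} P l = P t * P (t-1) * ⋯ * P s`
(the empty product, when `t < s`, is the identity). -/
noncomputable def prodDesc {N : ℕ} (P : ℕ → Matrix (Fin N) (Fin N) ℝ) (s t : ℕ) :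
    Matrix (Fin N) (Fin N) ℝ :=
  (List.ofFn (fun i : Fin (t + 1 - s) => P (t - (i : ℕ)))).prod

/-- Peeling the leftmost factor off the ordered product; the case `s = t + 1`, where the remaining
product is empty, is included. -/
theorem prodDesc_succ {N : ℕ} (P : ℕ → Matrix (Fin N) (Fin N) ℝ) {s t : ℕ} (h : s ≤ t + 1) :
    prodDesc P s (t + 1) = P (t + 1) * prodDesc P s t := by
  unfold prodDesc
  obtain ⟨d, hd⟩ := Nat.exists_eq_add_of_le h
  have h1 : t + 1 + 1 - s = d + 1 := by omega
  have h2 : t + 1 - s = d := by omega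
  rw [h1, h2, List.ofFn_succ, List.prod_cons]
  simp

theorem prodDesc_succ_self {N : ℕ} (P : ℕ → Matrix (Fin N) (Fin N) ℝ) (t : ℕ) :
    prodDesc P (t + 1) t = 1 := by
  simp [prodDesc]

/-- Telescoping identity for the partially averaged iterates: if `J` is idempotent, each
`P l` (for `1 ≤ l ≤ K−1`) equals `J` or the identity, `J x₁ = x₁`, and
`x_k = P_{k−1}(x_{k−1} − η g_{k−1})` for `2 ≤ k ≤ K`, then for every `1 ≤ k ≤ K`,
`(J − I) x_k = −η Σ_{s=1}^{k−1} (J − Π_{l=s}^{k−1} P_l) g_s`. -/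
theorem stmt_7 (N K : ℕ)
    (J : Matrix (Fin N) (Fin N) ℝ) (hJ : J * J = J)
    (η : ℝ)
    (P : ℕ → Matrix (Fin N) (Fin N) ℝ)
    (hP : ∀ l, 1 ≤ l → l ≤ K - 1 → P l = J ∨ P l = 1)
    (x g : ℕ → Fin N → ℝ)
    (hx1 : J.mulVec (x 1) = x 1)
    (hrec : ∀ k, 2 ≤ k → k ≤ K → x k = (P (k - 1)).mulVec (x (k - 1) - η • g (k - 1))) :
    ∀ k, 1 ≤ k → k ≤ K →
      (J - 1).mulVec (x k) =
        -η • ∑ s ∈ Finset.Icc 1 (k - 1), (J - prodDesc P s (k - 1)).mulVec (g s) := by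
  intro k hk1 hkK
  -- Induct on `m = k - 1` to avoid truncated subtraction.
  obtain ⟨m, rfl⟩ := Nat.exists_eq_add_of_le' hk1
  simp only [Nat.add_sub_cancel]
  clear hk1
  induction m with
  | zero => simp [Matrix.sub_mulVec, hx1]
  | succ m ih =>
    have ih := ih (by omega)
    have hx : x (m + 1 + 1) = (P (m + 1)).mulVec (x (m + 1) - η • g (m + 1)) :=
      hrec (m + 1 + 1) (by omega) hkK
    have hcase := hP (m + 1) (by omega) (by omega)
    have hPJ : P (m + 1) * J = J := by rcases hcase with h | h <;> simp [h, hJ]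
    have hJP : J * P (m + 1) = J := by rcases hcase with h | h <;> simp [h, hJ]
    have hcomm : (J - 1) * P (m + 1) = P (m + 1) * (J - 1) := by
      rw [sub_mul, mul_sub, hPJ, hJP, one_mul, mul_one]
    have hnew : P (m + 1) * (J - 1) = J - P (m + 1) := by rw [mul_sub, hPJ, mul_one]
    have hold : ∀ s ∈ Finset.Icc 1 m,
        (P (m + 1)).mulVec ((J - prodDesc P s m).mulVec (g s)) =
          (J - prodDesc P s (m + 1)).mulVec (g s) := by
      intro s hs
      rw [Finset.mem_Icc] at hs
      rw [Matrix.mulVec_mulVec, mul_sub, hPJ, prodDesc_succ P (s := s) (t := m) (by omega)]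
    have hlast : prodDesc P (m + 1) (m + 1) = P (m + 1) := by
      rw [prodDesc_succ P le_rfl, prodDesc_succ_self, mul_one]
    rw [hx, Matrix.mulVec_mulVec, hcomm, Matrix.mulVec_sub, ← Matrix.mulVec_mulVec, ih,
      Matrix.mulVec_smul, Matrix.mulVec_smul, Matrix.mulVec_sum, Finset.sum_congr rfl hold, hnew,
      Finset.sum_Icc_succ_top (by omega), hlast, smul_add, neg_smul η ((J - P (m + 1)).mulVec _),
      ← sub_eq_add_neg]
end

section
/- (Deterministic drift bound for the periodic partial-averaging operators.) Fix integers τ ≥ 1 and K ≥ 1 with τ dividing K, fix j ∈ {1,…,τ}, and let J ∈ ℝ^{N×N} be a symmetric idempotent matrix. Define P_l = J if l ≡ j (mod τ) and P_l = I (the identity) otherwise. Then for any vectors f_1, …, f_K ∈ ℝ^N: Σ_{k=1}^{K} ‖ Σ_{s=1}^{k−1} ( J − Π_{l=s}^{k−1} P_l ) f_s ‖² ≤ (τ(τ−1)/2) · Σ_{k=1}^{K} ‖f_k‖². -/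
/-!
The product `Π_{l=s}^{k-1} P_l` equals `J` as soon as one averaging index `l ≡ j (mod τ)` lies in
`[s, k-1]`, and equals `1` otherwise. Writing `w_k = (k-1-j) mod τ` for the number of steps since
the last averaging index, the summand `J - Π P_l` therefore vanishes unless `k - w_k ≤ s ≤ k-1`,
where it equals `J - 1`, a contraction (`sum_sq_sub_one_mulVec_le`). Cauchy–Schwarz over these at
most `w_k` indices bounds the `k`-th term on the left by `w_k * Σ_s ‖f_s‖²`, the sum running over
the window. After exchanging the sums, the coefficient of `‖f_s‖²` is the sum of `w_k` over those
`k` whose window contains `s`. Such `k` lie between two consecutive averaging times, so their `w_k`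
are distinct elements of `{0, …, τ-1}`, and the coefficient is at most `0 + 1 + ⋯ + (τ-1)`
(`sum_window_le`).
-/

open Finset

/-- The number of steps between `k - 1` and the last integer `≤ k - 1` congruent to `j` modulo `τ`,
i.e. `(k - 1 - j) mod τ`; the summand `τ` keeps the natural subtraction exact for `j ≤ τ`. -/
def windowLen (τ j k : ℕ) : ℕ := (k - 1 + τ - j) % τ

lemma prod_eq_one_or_eq {M : Type*} [Monoid M] {J : M} (hJ : J * J = J) (L : List M)
    (hL : ∀ a ∈ L, a = 1 ∨ a = J) : L.prod = 1 ∨ L.prod = J := by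
  induction L with
  | nil => simp
  | cons a l ih =>
    rw [List.prod_cons]
    rcases hL a (by simp) with h | h <;>
      rcases ih (fun b hb => hL b (by simp [hb])) with h' | h' <;> simp [h, h', hJ]

lemma prod_eq_of_mem {M : Type*} [Monoid M] {J : M} (hJ : J * J = J) (L : List M)
    (hL : ∀ a ∈ L, a = 1 ∨ a = J) (hmem : J ∈ L) : L.prod = J := by
  induction L with
  | nil => simp at hmem
  | cons a l ih =>
    have hl : ∀ b ∈ l, b = 1 ∨ b = J := fun b hb => hL b (by simp [hb])
    rw [List.prod_cons]
    rcases List.mem_cons.1 hmem with h | h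
    · rcases prod_eq_one_or_eq hJ l hl with h' | h' <;> simp [← h, h', hJ]
    · rw [ih hl h]
      rcases hL a (by simp) with h' | h' <;> simp [h', hJ]

lemma prodDesc_eq {N : ℕ} {τ j : ℕ} {J : Matrix (Fin N) (Fin N) ℝ} (hJ : J * J = J)
    {P : ℕ → Matrix (Fin N) (Fin N) ℝ} (hP : ∀ l, P l = if l % τ = j % τ then J else 1)
    {s t l : ℕ} (hs : s ≤ l) (ht : l ≤ t) (hl : l % τ = j % τ) : prodDesc P s t = J := by
  apply prod_eq_of_mem hJ
  · intro a ha
    obtain ⟨i, rfl⟩ := (List.mem_ofFn' _ _).1 ha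
    dsimp only
    rw [hP]
    split_ifs <;> simp
  · refine (List.mem_ofFn' _ _).2 ⟨⟨t - l, by omega⟩, ?_⟩
    have : t - (t - l) = l := by omega
    simp only [this]
    rw [hP, if_pos hl]

lemma prodDesc_eq_one {N : ℕ} {τ j : ℕ} {J : Matrix (Fin N) (Fin N) ℝ}
    {P : ℕ → Matrix (Fin N) (Fin N) ℝ} (hP : ∀ l, P l = if l % τ = j % τ then J else 1)
    {s t : ℕ} (h : ∀ l, s ≤ l → l ≤ t → l % τ ≠ j % τ) : prodDesc P s t = 1 := by
  apply List.prod_eq_one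
  intro a ha
  obtain ⟨i, rfl⟩ := (List.mem_ofFn' _ _).1 ha
  have := i.2
  dsimp only
  rw [hP, if_neg (h _ (by omega) (by omega))]

/-- The index `k - 1 - windowLen τ j k`, when nonnegative, is an averaging index. -/
lemma windowLen_mod {τ j k : ℕ} (hjτ : j ≤ τ) (h : windowLen τ j k ≤ k - 1) :
    (k - 1 - windowLen τ j k) % τ = j % τ := by
  have hd := Nat.mod_add_div (k - 1 + τ - j) τ
  change windowLen τ j k + _ = _ at hd
  set w := windowLen τ j k
  have e : k - 1 - w + τ = j + τ * ((k - 1 + τ - j) / τ) := by omega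
  rw [← Nat.add_mod_right, e, Nat.add_mul_mod_self_left]

/-- No averaging index lies in the window `[k - windowLen τ j k, k - 1]`. -/
lemma windowLen_not_mod {τ j k l : ℕ} (hjτ : j ≤ τ) (hτ : 1 ≤ τ)
    (h1 : k ≤ l + windowLen τ j k) (h2 : l ≤ k - 1) (hk : 1 ≤ k) : l % τ ≠ j % τ := by
  intro h
  have h0 : (l + τ - j) % τ = 0 := by
    apply Nat.sub_mod_eq_zero_of_mod_eq
    rw [Nat.add_mod_right, h]
  obtain ⟨q, hq⟩ := Nat.dvd_of_mod_eq_zero h0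
  have hlt : windowLen τ j k < τ := Nat.mod_lt _ hτ
  have : windowLen τ j k = k - 1 - l := by
    unfold windowLen
    rw [show k - 1 + τ - j = (k - 1 - l) + τ * q by omega, Nat.add_mul_mod_self_left,
      Nat.mod_eq_of_lt (by omega)]
  omega

/-- `J - 1` is a contraction, by the Pythagorean identity `‖v‖² = ‖Jv‖² + ‖(J - 1)v‖²`. -/
lemma sum_sq_sub_one_mulVec_le {N : ℕ} {J : Matrix (Fin N) (Fin N) ℝ}
    (hJsymm : J.transpose = J) (hJidem : J * J = J) (v : Fin N → ℝ) :
    ∑ i, ((J - 1).mulVec v i) ^ 2 ≤ ∑ i, v i ^ 2 := by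
  have key : ∑ i, J.mulVec v i * J.mulVec v i = ∑ i, v i * J.mulVec v i := by
    change J.mulVec v ⬝ᵥ J.mulVec v = v ⬝ᵥ J.mulVec v
    rw [Matrix.dotProduct_mulVec, ← Matrix.mulVec_transpose, hJsymm, Matrix.mulVec_mulVec, hJidem,
      dotProduct_comm]
  have h0 : 0 ≤ ∑ i, J.mulVec v i * J.mulVec v i :=
    Finset.sum_nonneg fun i _ => mul_self_nonneg _
  have e : ∑ i, ((J - 1).mulVec v i) ^ 2 =
      ∑ i, J.mulVec v i * J.mulVec v i - 2 * ∑ i, v i * J.mulVec v i + ∑ i, v i ^ 2 := by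
    rw [Finset.mul_sum, ← Finset.sum_sub_distrib, ← Finset.sum_add_distrib]
    refine Finset.sum_congr rfl fun i _ => ?_
    rw [Matrix.sub_mulVec, Matrix.one_mulVec, Pi.sub_apply]
    ring
  linarith

/-- If `s < k < k'` and the window of `k'` contains `s`, then `k' - k < τ`, so the two window
lengths differ. -/
lemma windowLen_injOn {τ j s : ℕ} (hjτ : j ≤ τ) (hτ : 1 ≤ τ) {k k' : ℕ} (hs : s < k)
    (hkk : k < k') (h' : k' ≤ s + windowLen τ j k') :
    windowLen τ j k ≠ windowLen τ j k' := by
  intro h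
  have hlt : windowLen τ j k' < τ := Nat.mod_lt _ hτ
  have : (k' - 1 + τ - j - (k - 1 + τ - j)) % τ = 0 :=
    Nat.sub_mod_eq_zero_of_mod_eq h.symm
  have := Nat.le_of_dvd (by omega) (Nat.dvd_of_mod_eq_zero this)
  omega

lemma sum_range_cast (τ : ℕ) : ∑ i ∈ Finset.range τ, (i : ℝ) = (τ : ℝ) * ((τ : ℝ) - 1) / 2 := by
  induction τ with
  | zero => simp
  | succ n ih => rw [Finset.sum_range_succ, ih]; push_cast; ring

lemma sum_window_le {τ j : ℕ} (hjτ : j ≤ τ) (hτ : 1 ≤ τ) (s K : ℕ) :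
    ∑ k ∈ (Finset.Icc 1 K).filter (fun k => s < k ∧ k ≤ s + windowLen τ j k),
      (windowLen τ j k : ℝ) ≤ (τ : ℝ) * ((τ : ℝ) - 1) / 2 := by
  rw [← sum_range_cast]
  have inj : Set.InjOn (windowLen τ j)
      ((Finset.Icc 1 K).filter (fun k => s < k ∧ k ≤ s + windowLen τ j k) : Set ℕ) := by
    intro a ha b hb hab
    simp only [Finset.coe_filter, Set.mem_ofPred_eq] at ha hb
    rcases lt_trichotomy a b with h | h | h
    · exact absurd hab (windowLen_injOn hjτ hτ ha.2.1 h hb.2.2)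
    · exact h
    · exact absurd hab.symm (windowLen_injOn hjτ hτ hb.2.1 h ha.2.2)
  rw [← Finset.sum_image (f := fun i : ℕ => (i : ℝ)) inj]
  refine Finset.sum_le_sum_of_subset_of_nonneg ?_ fun _ _ _ => Nat.cast_nonneg _
  intro i hi
  obtain ⟨k, -, rfl⟩ := Finset.mem_image.1 hi
  exact Finset.mem_range.2 (Nat.mod_lt _ hτ)

/-- The bound for a single `k`: contraction and Cauchy–Schwarz over the window. -/
lemma term_le {N τ j k : ℕ} (hτ : 1 ≤ τ) (hjτ : j ≤ τ) (hk : 1 ≤ k)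
    {J : Matrix (Fin N) (Fin N) ℝ} (hJsymm : J.transpose = J) (hJidem : J * J = J)
    {P : ℕ → Matrix (Fin N) (Fin N) ℝ} (hP : ∀ l, P l = if l % τ = j % τ then J else 1)
    (f : ℕ → Fin N → ℝ) :
    ∑ i : Fin N,
        ((∑ s ∈ Finset.Icc 1 (k - 1), (J - prodDesc P s (k - 1)).mulVec (f s)) i) ^ 2 ≤
      ∑ s ∈ (Finset.Icc 1 (k - 1)).filter (fun s => k ≤ s + windowLen τ j k),
        (windowLen τ j k : ℝ) * ∑ i, (f s i) ^ 2 := by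
  set W := (Finset.Icc 1 (k - 1)).filter (fun s => k ≤ s + windowLen τ j k) with hW
  have e : ∑ s ∈ Finset.Icc 1 (k - 1), (J - prodDesc P s (k - 1)).mulVec (f s) =
      (J - 1).mulVec (∑ s ∈ W, f s) := by
    rw [Matrix.mulVec_sum, hW, Finset.sum_filter]
    refine Finset.sum_congr rfl fun s hs => ?_
    rw [Finset.mem_Icc] at hs
    split_ifs with h
    · rw [prodDesc_eq_one hP fun l h1 h2 => windowLen_not_mod hjτ hτ (by omega) h2 hk]
    · rw [prodDesc_eq hJidem hP (l := k - 1 - windowLen τ j k) (by omega) (by omega)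
        (windowLen_mod hjτ (by omega)), sub_self, Matrix.zero_mulVec]
  have hcard : W.card ≤ windowLen τ j k := by
    have hsub : W ⊆ Finset.Ico (k - windowLen τ j k) k := by
      intro s hs
      rw [hW, Finset.mem_filter, Finset.mem_Icc] at hs
      rw [Finset.mem_Ico]
      omega
    refine (Finset.card_le_card hsub).trans ?_
    rw [Nat.card_Ico]
    omega
  rw [e]
  refine (sum_sq_sub_one_mulVec_le hJsymm hJidem _).trans ?_
  rw [← Finset.mul_sum, Finset.sum_comm, Finset.mul_sum]
  refine Finset.sum_le_sum fun i _ => ?_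
  rw [Finset.sum_apply]
  refine sq_sum_le_card_mul_sum_sq.trans ?_
  gcongr

/-- Deterministic drift bound for the periodic partial-averaging operators: with
`P_l = J` when `l ≡ j (mod τ)` and `P_l = I` otherwise (`J` symmetric idempotent),
`Σ_{k=1}^{K} ‖Σ_{s=1}^{k−1} (J − Π_{l=s}^{k−1} P_l) f_s‖² ≤ (τ(τ−1)/2) Σ_{k=1}^{K} ‖f_k‖²`,
Euclidean norms written as sums of squares of coordinates. -/
theorem stmt_8 (N τ K : ℕ) (hτ : 1 ≤ τ) (hK : 1 ≤ K) (hdvd : τ ∣ K)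
    (j : ℕ) (hj1 : 1 ≤ j) (hjτ : j ≤ τ)
    (J : Matrix (Fin N) (Fin N) ℝ) (hJsymm : J.transpose = J) (hJidem : J * J = J)
    (P : ℕ → Matrix (Fin N) (Fin N) ℝ)
    (hP : ∀ l, P l = if l % τ = j % τ then J else 1)
    (f : ℕ → Fin N → ℝ) :
    ∑ k ∈ Finset.Icc 1 K, ∑ i : Fin N,
        ((∑ s ∈ Finset.Icc 1 (k - 1), (J - prodDesc P s (k - 1)).mulVec (f s)) i) ^ 2 ≤
      (τ : ℝ) * ((τ : ℝ) - 1) / 2 * ∑ k ∈ Finset.Icc 1 K, ∑ i : Fin N, (f k i) ^ 2 := by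
  refine (Finset.sum_le_sum fun k hk =>
    term_le hτ hjτ (Finset.mem_Icc.1 hk).1 hJsymm hJidem hP f).trans ?_
  rw [Finset.sum_comm' (t' := Finset.Icc 1 K)
    (s' := fun s => (Finset.Icc 1 K).filter (fun k => s < k ∧ k ≤ s + windowLen τ j k))
    (by intro k s; simp only [Finset.mem_filter, Finset.mem_Icc]; omega), Finset.mul_sum]
  refine Finset.sum_le_sum fun s _ => ?_
  rw [← Finset.sum_mul]
  exact mul_le_mul_of_nonneg_right (sum_window_le hjτ hτ s K)
    (Finset.sum_nonneg fun i _ => sq_nonneg _)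
end
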